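/- arXiv:1612.06771 — 2 statements merged into one kernel-verified Lean document; each statement's English description precedes it below -/
import Mathlib

section
/- Let X and Y be ∞-pseudo-metric spaces. If (1,α) is an APD profile of X and (1,β) is an APD profile of Y, then (2, α·β + α + β) is an APD profile of X × Y with the supremum ∞-pseudo-metric; that is, for all reals 0 < r ≤ s there is a decomposition X × Y = W_0 ∪ W_1 such that W_0 is the union of at most 2 subsets of scale-r-dimension 0 and W_1 is the union of at most ⌊α(r)⌋·⌊β(r)⌋ + ⌊α(r)⌋ + ⌊β(r)⌋ subsets of scale-s-dimension 0. -/
open Set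
open scoped ENNReal

/-- `y` is joined to `x` by a scale-`r`-chain in `A`: a finite sequence of points of `A`
starting at `x` and ending at `y`, consecutive points of which have intersecting open
`r`-balls. -/
def ScaleChain {X : Type*} [PseudoEMetricSpace X] (r : ℝ) (A : Set X) (x y : X) : Prop :=
  ∃ n : ℕ, ∃ c : ℕ → X, (∀ i ≤ n, c i ∈ A) ∧ c 0 = x ∧ c n = y ∧
    ∀ i < n,
      (EMetric.ball (c i) (ENNReal.ofReal r) ∩
        EMetric.ball (c (i + 1)) (ENNReal.ofReal r)).Nonempty

/-- The scale-`r`-component of `x` in `A`: all points of `A` joined to `x` by a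
scale-`r`-chain in `A`. -/
def ScaleComponent {X : Type*} [PseudoEMetricSpace X] (r : ℝ) (A : Set X) (x : X) : Set X :=
  {y | ScaleChain r A x y}

/-- `A` has scale-`r`-dimension `0`: there is a finite bound on the diameters of all
scale-`r`-components of `A`. -/
def ScaleDimZero {X : Type*} [PseudoEMetricSpace X] (r : ℝ) (A : Set X) : Prop :=
  ∃ M : ℝ≥0∞, M ≠ ⊤ ∧ ∀ x ∈ A, EMetric.diam (ScaleComponent r A x) ≤ M

/-- `A` is the union of at most `n` subsets of scale-`s`-dimension `0`. -/
def UnionAtMost {X : Type*} [PseudoEMetricSpace X] (n : ℕ) (s : ℝ) (A : Set X) : Prop :=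
  ∃ G : Fin n → Set X, A = ⋃ j, G j ∧ ∀ j, ScaleDimZero s (G j)

/-- `(1, α)` is an APD profile of `X`: for all reals `0 < r ≤ s` there is a decomposition
`X = X₀ ∪ X₁` with `X₀` of scale-`r`-dimension `0` and `X₁` the union of at most `⌊α r⌋`
subsets of scale-`s`-dimension `0`. -/
def APDPair (X : Type*) [PseudoEMetricSpace X] (α : ℝ → ℝ) : Prop :=
  ∀ r s : ℝ, 0 < r → r ≤ s →
    ∃ X₀ X₁ : Set X, X₀ ∪ X₁ = univ ∧ ScaleDimZero r X₀ ∧ UnionAtMost (Nat.floor (α r)) s X₁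

/-!
Split `X = X₀ ∪ X₁` and `Y = Y₀ ∪ Y₁`. Then `X × Y = (X₀ × Y) ∪ (X × Y₀) ∪ (X₁ × Y₁)`, and
`X₁ × Y₁` contributes the `⌊α r⌋ * ⌊β r⌋` products of the pieces of `X₁` and `Y₁`. By symmetry it
remains to split `X₀ × Y` into one set of scale-`r`-dimension `0` and `⌊β r⌋` sets of
scale-`s`-dimension `0`.

Colour `X₀` by finitely many colours, constantly on scale-`r`-components, so that each colour class
has scale-`s`-dimension `0`: cover `X` by finitely many sets of dimension `0` at a scale exceeding
`s` by more than the diameters of the components, and let the colour of a component record which of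
these sets it meets. Decompose `Y` as `Y₀ ∪ ⋃ k, G k`, where the `G k` have dimension `0` at
a scale much larger than `s`. Over the `i`-th colour class, cut `Y` along the shells
`4is ≤ d(y, G k) < 4is + 2r`. A scale-`r`-chain avoiding these shells cannot cross them, so
their complement has scale-`r`-dimension `0`. The shells around the same `G k` belonging to distinct
colours are too far apart to be joined at scale `s`, so the union over all colours of the `k`-th
shells still has scale-`s`-dimension `0`.
-/

section ScaleDimension

open Metric
open scoped NNReal

variable {X Y ι κ : Type*} [PseudoEMetricSpace X] [PseudoEMetricSpace Y] {r s t : ℝ}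

/-- The open `r`-balls around `x` and `y` intersect. This is the relation between consecutive
points of a scale-`r`-chain. -/
def BallsMeet (r : ℝ) (x y : X) : Prop :=
  (eball x (ENNReal.ofReal r) ∩ eball y (ENNReal.ofReal r)).Nonempty

namespace BallsMeet

variable {x y x' y' : X}

theorem symm (h : BallsMeet r x y) : BallsMeet r y x := by
  rwa [BallsMeet, inter_comm]

theorem mono (hrs : r ≤ s) (h : BallsMeet r x y) : BallsMeet s x y :=
  Set.Nonempty.mono (inter_subset_inter (eball_subset_eball (ENNReal.ofReal_le_ofReal hrs))
    (eball_subset_eball (ENNReal.ofReal_le_ofReal hrs))) h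

theorem map {f : X → Y} (hf : LipschitzWith 1 f) (h : BallsMeet r x y) :
    BallsMeet r (f x) (f y) := by
  obtain ⟨z, hzx, hzy⟩ := h
  exact ⟨f z, by simpa using hf.mapsTo_eball one_ne_zero x _ hzx,
    by simpa using hf.mapsTo_eball one_ne_zero y _ hzy⟩

theorem of_edist_lt (h : BallsMeet r x y) (hx : edist x x' < ENNReal.ofReal t)
    (hy : edist y y' < ENNReal.ofReal t) : BallsMeet (r + t) x' y' := by
  obtain ⟨z, hzx, hzy⟩ := h
  have hr : 0 < r := ENNReal.ofReal_pos.1 (pos_of_gt hzx)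
  have ht : 0 < t := ENNReal.ofReal_pos.1 (pos_of_gt hx)
  refine ⟨z, ?_, ?_⟩ <;> rw [mem_eball, ENNReal.ofReal_add hr.le ht.le]
  · exact (edist_triangle z x x').trans_lt (ENNReal.add_lt_add hzx hx)
  · exact (edist_triangle z y y').trans_lt (ENNReal.add_lt_add hzy hy)

theorem mem_thickening {E : Set X} (h : BallsMeet r x y) (hx : x ∈ thickening t E) :
    y ∈ thickening (t + 2 * r) E := by
  obtain ⟨z, hzx, hzy⟩ := h
  have hz : z ∈ thickening r (thickening t E) :=
    (mem_thickening_iff_exists_edist_lt _ _).2 ⟨x, hx, hzx⟩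
  have hy : y ∈ thickening r (thickening (r + t) E) :=
    (mem_thickening_iff_exists_edist_lt _ _).2
      ⟨z, thickening_thickening_subset _ _ _ hz, mem_eball'.1 hzy⟩
  convert thickening_thickening_subset _ _ _ hy using 2
  ring

end BallsMeet

/-- `f` is constant along the scale-`r`-chains in `A`; this is the scale-`r` analogue of a locally
constant function. -/
def ScaleLocConstOn (r : ℝ) (A : Set X) (f : X → ι) : Prop :=
  ∀ ⦃x⦄, x ∈ A → ∀ ⦃y⦄, y ∈ A → BallsMeet r x y → f x = f y

namespace ScaleChain

variable {A : Set X} {x y z : X}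

theorem left_mem (h : ScaleChain r A x y) : x ∈ A := by
  obtain ⟨n, c, hc, rfl, -, -⟩ := h
  exact hc 0 n.zero_le

theorem right_mem (h : ScaleChain r A x y) : y ∈ A := by
  obtain ⟨n, c, hc, -, rfl, -⟩ := h
  exact hc n le_rfl

theorem refl (hx : x ∈ A) : ScaleChain r A x x :=
  ⟨0, fun _ => x, fun _ _ => hx, rfl, rfl, fun i hi => absurd hi i.not_lt_zero⟩

theorem cons (hx : x ∈ A) (hxy : BallsMeet r x y) (h : ScaleChain r A y z) :
    ScaleChain r A x z := by
  obtain ⟨n, c, hc, rfl, rfl, hmeet⟩ := h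
  refine ⟨n + 1, fun i => Nat.casesOn i x c, ?_, rfl, rfl, ?_⟩
  · rintro (_ | i) hi
    · exact hx
    · exact hc i (by omega)
  · rintro (_ | i) hi
    · exact hxy
    · exact hmeet i (by omega)

theorem map {B : Set Y} {f : X → Y} (hf : MapsTo f A B)
    (hmeet : ∀ ⦃a⦄, a ∈ A → ∀ ⦃b⦄, b ∈ A → BallsMeet r a b → BallsMeet s (f a) (f b))
    (h : ScaleChain r A x y) : ScaleChain s B (f x) (f y) := by
  obtain ⟨n, c, hc, rfl, rfl, hn⟩ := h
  exact ⟨n, f ∘ c, fun i hi => hf (hc i hi), rfl, rfl,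
    fun i hi => hmeet (hc i hi.le) (hc (i + 1) hi) (hn i hi)⟩

theorem inter_fiber {f : X → ι} (hf : ScaleLocConstOn r A f) (h : ScaleChain r A x y) :
    ScaleChain r (A ∩ f ⁻¹' {f x}) x y := by
  obtain ⟨n, c, hc, rfl, rfl, hn⟩ := h
  have hconst : ∀ i ≤ n, f (c i) = f (c 0) := by
    intro i hi
    induction i with
    | zero => rfl
    | succ i ih => exact (hf (hc i (by omega)) (hc _ hi) (hn i hi)).symm.trans (ih (by omega))
  exact ⟨n, c, fun i hi => ⟨hc i hi, hconst i hi⟩, rfl, rfl, hn⟩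

end ScaleChain

theorem scaleLocConstOn_scaleComponent (r : ℝ) (A : Set X) :
    ScaleLocConstOn r A (ScaleComponent r A) := fun _ hx _ hy h =>
  Subset.antisymm (fun _ hz => .cons hy h.symm hz) fun _ hz => .cons hx h hz

theorem scaleDimZero_iff {A : Set X} :
    ScaleDimZero r A ↔ ∃ M : ℝ≥0, ∀ x y, ScaleChain r A x y → edist x y ≤ M := by
  constructor
  · rintro ⟨M, hM, hdiam⟩
    lift M to ℝ≥0 using hM
    exact ⟨M, fun x y h => (edist_le_ediam_of_mem (s := ScaleComponent r A x)
      (ScaleChain.refl h.left_mem) h).trans (hdiam x h.left_mem)⟩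
  · rintro ⟨M, hM⟩
    exact ⟨M + M, by finiteness, fun x _ => ediam_le fun y hy z hz =>
      (edist_triangle_left y z x).trans (add_le_add (hM x y hy) (hM x z hz))⟩

theorem scaleDimZero_empty : ScaleDimZero r (∅ : Set X) :=
  ⟨0, ENNReal.zero_ne_top, fun _ hx => hx.elim⟩

namespace ScaleDimZero

theorem anti {A B : Set X} (hrs : r ≤ s) (hAB : A ⊆ B) (hB : ScaleDimZero s B) :
    ScaleDimZero r A := by
  obtain ⟨M, hM⟩ := scaleDimZero_iff.1 hB
  exact scaleDimZero_iff.2 ⟨M, fun x y h => hM x y (h.map hAB fun _ _ _ _ => .mono hrs)⟩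

theorem thickening {A : Set X} (hA : ScaleDimZero (r + t) A) :
    ScaleDimZero r (thickening t A) := by
  obtain ⟨M, hM⟩ := scaleDimZero_iff.1 hA
  refine scaleDimZero_iff.2 ⟨t.toNNReal + M + t.toNNReal, fun x y h => ?_⟩
  have : Nonempty X := ⟨x⟩
  choose! f hfA hf using fun a => (mem_thickening_iff_exists_edist_lt A a).1
  have hchain : ScaleChain (r + t) A (f x) (f y) :=
    h.map hfA fun a ha b hb hab => hab.of_edist_lt (hf a ha) (hf b hb)
  calc edist x y ≤ edist x (f x) + edist (f x) (f y) + edist (f y) y := edist_triangle4 ..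
    _ ≤ ENNReal.ofReal t + M + ENNReal.ofReal t := by
      gcongr
      · exact (hf x h.left_mem).le
      · exact hM _ _ hchain
      · exact edist_comm y (f y) ▸ (hf y h.right_mem).le

theorem prod {A : Set X} {B : Set Y} (hA : ScaleDimZero r A) (hB : ScaleDimZero r B) :
    ScaleDimZero r (A ×ˢ B) := by
  obtain ⟨M, hM⟩ := scaleDimZero_iff.1 hA
  obtain ⟨N, hN⟩ := scaleDimZero_iff.1 hB
  refine scaleDimZero_iff.2 ⟨max M N, fun p q h => ?_⟩
  rw [ENNReal.coe_max]
  exact max_le_max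
    (hM _ _ (h.map (fun _ ha => ha.1) fun _ _ _ _ => .map LipschitzWith.prod_fst))
    (hN _ _ (h.map (fun _ ha => ha.2) fun _ _ _ _ => .map LipschitzWith.prod_snd))

theorem preimage {f : X → Y} (hf : Isometry f) {B : Set Y} (hB : ScaleDimZero r B) :
    ScaleDimZero r (f ⁻¹' B) := by
  obtain ⟨M, hM⟩ := scaleDimZero_iff.1 hB
  refine scaleDimZero_iff.2 ⟨M, fun x y h => ?_⟩
  rw [← hf.edist_eq]
  exact hM _ _ (h.map (mapsTo_preimage f B) fun _ _ _ _ => .map hf.lipschitz)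

end ScaleDimZero

theorem ScaleLocConstOn.scaleDimZero [Finite ι] {A : Set X} {f : X → ι}
    (hf : ScaleLocConstOn r A f) (hfiber : ∀ i, ScaleDimZero r (A ∩ f ⁻¹' {i})) :
    ScaleDimZero r A := by
  cases nonempty_fintype ι
  choose M hM using fun i => scaleDimZero_iff.1 (hfiber i)
  refine scaleDimZero_iff.2 ⟨∑ i, M i, fun x y h => (hM _ x y (h.inter_fiber hf)).trans ?_⟩
  exact_mod_cast Finset.single_le_sum_of_canonicallyOrdered (Finset.mem_univ (f x))

theorem unionAtMost_iUnion [Fintype ι] {n : ℕ} (hn : Fintype.card ι = n) {G : ι → Set X}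
    (hG : ∀ i, ScaleDimZero s (G i)) : UnionAtMost n s (⋃ i, G i) :=
  let e := Fintype.equivFinOfCardEq hn
  ⟨G ∘ e.symm, (e.symm.surjective.iUnion_comp G).symm, fun _ => hG _⟩

theorem ScaleDimZero.unionAtMost_one {A : Set X} (hA : ScaleDimZero s A) : UnionAtMost 1 s A :=
  ⟨fun _ => A, (iUnion_const A).symm, fun _ => hA⟩

namespace UnionAtMost

variable {m n : ℕ}

theorem union {A B : Set X} (hA : UnionAtMost m s A) (hB : UnionAtMost n s B) :
    UnionAtMost (m + n) s (A ∪ B) := by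
  obtain ⟨G, rfl, hG⟩ := hA
  obtain ⟨H, rfl, hH⟩ := hB
  simpa only [iUnion_sum, Sum.elim_inl, Sum.elim_inr] using
    unionAtMost_iUnion (by simp)
      (Sum.rec hG hH : ∀ i : Fin m ⊕ Fin n, ScaleDimZero s (Sum.elim G H i))

theorem prod {A : Set X} {B : Set Y} (hA : UnionAtMost m s A) (hB : UnionAtMost n s B) :
    UnionAtMost (m * n) s (A ×ˢ B) := by
  obtain ⟨G, rfl, hG⟩ := hA
  obtain ⟨H, rfl, hH⟩ := hB
  rw [← iUnion_prod]
  exact unionAtMost_iUnion (by simp) fun i => (hG i.1).prod (hH i.2)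

theorem preimage {f : X → Y} (hf : Isometry f) {B : Set Y} (hB : UnionAtMost n s B) :
    UnionAtMost n s (f ⁻¹' B) := by
  obtain ⟨G, rfl, hG⟩ := hB
  exact ⟨fun j => f ⁻¹' G j, preimage_iUnion, fun j => (hG j).preimage hf⟩

end UnionAtMost

/-- At every scale `s`, `X` is a finite union of sets of scale-`s`-dimension `0`. The number of
sets may depend on `s`. -/
def FiniteScaleDim (X : Type*) [PseudoEMetricSpace X] : Prop :=
  ∀ s : ℝ, 0 < s → ∃ n : ℕ, UnionAtMost n s (univ : Set X)

/-- The condition that an APD profile `(1, α)` with `⌊α r⌋ = n` imposes on `X` at the single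
scale `r`. -/
def APDAt (X : Type*) [PseudoEMetricSpace X] (r : ℝ) (n : ℕ) : Prop :=
  ∀ s : ℝ, r ≤ s →
    ∃ X₀ X₁ : Set X, X₀ ∪ X₁ = univ ∧ ScaleDimZero r X₀ ∧ UnionAtMost n s X₁

theorem APDPair.apdAt {α : ℝ → ℝ} (hX : APDPair X α) (hr : 0 < r) : APDAt X r ⌊α r⌋₊ :=
  fun s => hX r s hr

theorem APDPair.finiteScaleDim {α : ℝ → ℝ} (hX : APDPair X α) : FiniteScaleDim X := by
  intro s hs
  obtain ⟨X₀, X₁, hcov, hX₀, hX₁⟩ := hX s s hs le_rfl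
  exact ⟨_, hcov ▸ hX₀.unionAtMost_one.union hX₁⟩

/-- The points whose distance to `E` is at least `u` and less than `u + w`. Shells that are
wide enough block the scale-`r`-chains going away from `E`. -/
def shell (u w : ℝ) (E : Set X) : Set X :=
  thickening (u + w) E \ thickening u E

theorem scaleDimZero_compl_iUnion_shell [Finite κ] {Y₀ : Set Y} {G : κ → Set Y} {u : ℝ}
    (hu : 0 ≤ u) (hr : 0 < r) (hcov : Y₀ ∪ ⋃ k, G k = univ) (hY₀ : ScaleDimZero r Y₀)
    (hG : ∀ k, ScaleDimZero r (thickening u (G k))) :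
    ScaleDimZero r (⋃ k, shell u (2 * r) (G k))ᶜ := by
  have hinside {y k} (hy : y ∈ (⋃ k, shell u (2 * r) (G k))ᶜ)
      (h : y ∈ thickening (u + 2 * r) (G k)) : y ∈ thickening u (G k) := by
    by_contra hyu
    exact hy (mem_iUnion.2 ⟨k, h, hyu⟩)
  have hconst : ScaleLocConstOn r (⋃ k, shell u (2 * r) (G k))ᶜ
      fun y => {k | y ∈ thickening u (G k)} := fun a ha b hb hab =>
    Subset.antisymm (fun _ hk => hinside hb (hab.mem_thickening hk))
      fun _ hk => hinside ha (hab.symm.mem_thickening hk)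
  refine hconst.scaleDimZero fun S => ?_
  rcases S.eq_empty_or_nonempty with rfl | ⟨k, hk⟩
  · refine hY₀.anti le_rfl fun y ⟨hy, hyS⟩ => ?_
    refine (hcov.ge (mem_univ y)).resolve_right fun hyG => ?_
    obtain ⟨k, hk⟩ := mem_iUnion.1 hyG
    have hyk := hinside hy (self_subset_thickening (by positivity) _ hk)
    exact (hyS.subset hyk : k ∈ (∅ : Set κ))
  · exact (hG k).anti le_rfl fun y ⟨_, hyS⟩ => hyS.superset hk

theorem BallsMeet.notMem_shell_of_mem_shell {E : Set X} {x y : X} {u v w w' : ℝ}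
    (huv : u + w + 2 * s ≤ v) (h : BallsMeet s x y) (hx : x ∈ shell u w E) :
    y ∉ shell v w' E := fun hy =>
  hy.2 (thickening_mono huv E (h.mem_thickening hx.1))

theorem APDAt.exists_separated_families {n : ℕ} (hY : APDAt Y r n) (hr : 0 < r) (hrs : r ≤ s)
    (ι : Type*) [Finite ι] :
    ∃ A : ι → Fin n → Set Y, (∀ i, ScaleDimZero r (⋃ k, A i k)ᶜ) ∧
      (∀ k, ScaleDimZero s (⋃ i, A i k)) ∧
      ∀ k i j a b, a ∈ A i k → b ∈ A j k → BallsMeet s a b → i = j := by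
  have hs : 0 < s := hr.trans_le hrs
  obtain ⟨N, ⟨e⟩⟩ := Finite.exists_equiv_fin ι
  let u : ι → ℝ := fun i => 4 * (e i : ℕ) * s
  have hu : ∀ i, 0 ≤ u i := fun i => by positivity
  have hgap : ∀ {i j}, e i < e j → u i + 2 * r + 2 * s ≤ u j := fun {i j} hij => by
    have : ((e i : ℕ) : ℝ) + 1 ≤ (e j : ℕ) := by exact_mod_cast hij
    simp only [u]
    nlinarith
  have huN : ∀ i, u i + 2 * r ≤ 4 * N * s := fun i => by
    have : ((e i : ℕ) : ℝ) + 1 ≤ N := by exact_mod_cast (e i).2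
    simp only [u]
    nlinarith
  obtain ⟨Y₀, Y₁, hcov, hY₀, G, rfl, hG⟩ := hY (s + 4 * N * s)
    (hrs.trans (le_add_of_nonneg_right (by positivity)))
  have hthick : ∀ k, ScaleDimZero s (thickening (4 * N * s) (G k)) := fun k => (hG k).thickening
  refine ⟨fun i k => shell (u i) (2 * r) (G k), fun i => ?_, fun k => ?_, ?_⟩
  · exact scaleDimZero_compl_iUnion_shell (hu i) hr hcov hY₀ fun k =>
      (hthick k).anti hrs (thickening_mono (by linarith [huN i]) _)
  · exact (hthick k).anti le_rfl
      (iUnion_subset fun i => sdiff_subset.trans (thickening_mono (huN i) _))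
  · intro k i j a b ha hb hab
    rcases lt_trichotomy (e i) (e j) with h | h | h
    · exact absurd hb (hab.notMem_shell_of_mem_shell (hgap h) ha)
    · exact e.injective h
    · exact absurd ha (hab.symm.notMem_shell_of_mem_shell (hgap h) hb)

theorem ScaleDimZero.exists_coloring (hX : FiniteScaleDim X) (hs : 0 < s) {A : Set X}
    (hA : ScaleDimZero r A) :
    ∃ (n : ℕ) (col : X → Set (Fin n)),
      ScaleLocConstOn r A col ∧ ∀ S, ScaleDimZero s (A ∩ col ⁻¹' {S}) := by
  obtain ⟨M, hM⟩ := scaleDimZero_iff.1 hA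
  obtain ⟨n, Z, hcov, hZ⟩ := hX (s + (M + 1)) (by positivity)
  refine ⟨n, fun x => {i | (ScaleComponent r A x ∩ Z i).Nonempty}, ?_, fun S => ?_⟩
  · intro x hx y hy hxy
    simp only [scaleLocConstOn_scaleComponent r A hx hy hxy]
  rcases S.eq_empty_or_nonempty with rfl | ⟨i, hi⟩
  · refine scaleDimZero_empty.anti le_rfl fun x ⟨hx, hxS⟩ => ?_
    obtain ⟨i, hi⟩ := mem_iUnion.1 (hcov.subset (mem_univ x))
    exact hxS.subset (show i ∈ _ from ⟨x, .refl hx, hi⟩)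
  · refine (hZ i).thickening.anti le_rfl fun x ⟨_, hxS⟩ => ?_
    obtain ⟨z, hz, hzi⟩ := hxS.superset hi
    refine (mem_thickening_iff_exists_edist_lt _ _).2 ⟨z, hzi, (hM x z hz).trans_lt ?_⟩
    exact ENNReal.lt_ofReal_iff_toReal_lt (by simp) |>.2 (by simp)

/-- The set over `A` whose fibre over a point of colour `i` is `B i`. -/
def coloredProd (A : Set X) (col : X → ι) (B : ι → Set Y) : Set (X × Y) :=
  {p | p.1 ∈ A ∧ p.2 ∈ B (col p.1)}

theorem scaleDimZero_coloredProd [Finite ι] {A : Set X} {col : X → ι} {B : ι → Set Y}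
    (hcol : ScaleLocConstOn r (coloredProd A col B) (col ∘ Prod.fst))
    (hA : ∀ i, ScaleDimZero r (A ∩ col ⁻¹' {i})) (hB : ∀ i, ScaleDimZero r (B i)) :
    ScaleDimZero r (coloredProd A col B) := by
  refine hcol.scaleDimZero fun i => ((hA i).prod (hB i)).anti le_rfl ?_
  rintro p ⟨⟨hpA, hpB⟩, rfl⟩
  exact ⟨⟨hpA, rfl⟩, hpB⟩

theorem APDAt.exists_prod_univ_eq_union {n : ℕ} (hX : FiniteScaleDim X) (hY : APDAt Y r n)
    (hr : 0 < r) (hrs : r ≤ s) {A : Set X} (hA : ScaleDimZero r A) :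
    ∃ W V : Set (X × Y), A ×ˢ univ = W ∪ V ∧ ScaleDimZero r W ∧ UnionAtMost n s V := by
  obtain ⟨N, col, hcol, hfiber⟩ := hA.exists_coloring hX (hr.trans_le hrs)
  obtain ⟨B, hBcompl, hBunion, hBsep⟩ := hY.exists_separated_families hr hrs (Set (Fin N))
  refine ⟨coloredProd A col fun i => (⋃ k, B i k)ᶜ, ⋃ k, coloredProd A col fun i => B i k,
    ?_, ?_, unionAtMost_iUnion (Fintype.card_fin n) fun k => ?_⟩
  · ext p
    simp only [coloredProd, mem_prod, mem_univ, mem_union, mem_iUnion, mem_compl_iff, mem_ofPred_eq]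
    grind
  · exact scaleDimZero_coloredProd
      (fun p hp q hq h => hcol hp.1 hq.1 (h.map LipschitzWith.prod_fst))
      (fun i => (hfiber i).anti hrs subset_rfl) hBcompl
  · exact scaleDimZero_coloredProd
      (fun p hp q hq h => hBsep k _ _ _ _ hp.2 hq.2 (h.map LipschitzWith.prod_snd))
      hfiber fun i => (hBunion k).anti le_rfl (subset_iUnion_of_subset i subset_rfl)

theorem isometry_swap : Isometry (Prod.swap : X × Y → Y × X) :=
  fun _ _ => max_comm _ _

theorem apdPair_prod_general {a b : ℕ} (hX : FiniteScaleDim X) (hY : FiniteScaleDim Y)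
    (hXr : APDAt X r a) (hYr : APDAt Y r b) (hr : 0 < r) (hrs : r ≤ s) :
    ∃ W₀ W₁ : Set (X × Y), W₀ ∪ W₁ = univ ∧ UnionAtMost 2 r W₀ ∧
      UnionAtMost (a * b + a + b) s W₁ := by
  obtain ⟨X₀, X₁, hXcov, hX₀, hX₁⟩ := hXr s hrs
  obtain ⟨Y₀, Y₁, hYcov, hY₀, hY₁⟩ := hYr s hrs
  obtain ⟨W, V, hWV, hW, hV⟩ := hYr.exists_prod_univ_eq_union hX hr hrs hX₀
  obtain ⟨W', V', hWV', hW', hV'⟩ := hXr.exists_prod_univ_eq_union hY hr hrs hY₀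
  refine ⟨W ∪ Prod.swap ⁻¹' W', X₁ ×ˢ Y₁ ∪ Prod.swap ⁻¹' V' ∪ V, ?_,
    hW.unionAtMost_one.union (hW'.preimage isometry_swap).unionAtMost_one,
    ((hX₁.prod hY₁).union (hV'.preimage isometry_swap)).union hV⟩
  calc W ∪ Prod.swap ⁻¹' W' ∪ (X₁ ×ˢ Y₁ ∪ Prod.swap ⁻¹' V' ∪ V)
      = (W ∪ V) ∪ Prod.swap ⁻¹' (W' ∪ V') ∪ X₁ ×ˢ Y₁ := by rw [preimage_union]; ac_rfl
    _ = X₀ ×ˢ univ ∪ univ ×ˢ Y₀ ∪ X₁ ×ˢ Y₁ := by rw [← hWV, ← hWV', preimage_swap_prod]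
    _ = univ := by
      ext ⟨x, y⟩
      have hx : x ∈ X₀ ∪ X₁ := hXcov ▸ mem_univ x
      have hy : y ∈ Y₀ ∪ Y₁ := hYcov ▸ mem_univ y
      simp only [mem_union, mem_prod, mem_univ] at hx hy ⊢
      tauto

end ScaleDimension

/-- Let `X` and `Y` be `∞`-pseudo-metric spaces. If `(1, α)` is an APD profile of `X` and
`(1, β)` is an APD profile of `Y`, then `(2, α·β + α + β)` is an APD profile of `X × Y` with
the supremum `∞`-pseudo-metric: for all reals `0 < r ≤ s` there is a decomposition
`X × Y = W₀ ∪ W₁` such that `W₀` is the union of at most `2` subsets of scale-`r`-dimension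
`0` and `W₁` is the union of at most `⌊α r⌋·⌊β r⌋ + ⌊α r⌋ + ⌊β r⌋` subsets of
scale-`s`-dimension `0`. -/
theorem apdPair_prod {X Y : Type*} [PseudoEMetricSpace X] [PseudoEMetricSpace Y]
    (α β : ℝ → ℝ)
    (hαmono : MonotoneOn α (Set.Ioi (0 : ℝ))) (hαnonneg : ∀ t : ℝ, 0 < t → 0 ≤ α t)
    (hβmono : MonotoneOn β (Set.Ioi (0 : ℝ))) (hβnonneg : ∀ t : ℝ, 0 < t → 0 ≤ β t)
    (hX : APDPair X α) (hY : APDPair Y β) :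
    ∀ r s : ℝ, 0 < r → r ≤ s →
      ∃ W₀ W₁ : Set (X × Y), W₀ ∪ W₁ = univ ∧ UnionAtMost 2 r W₀ ∧
        UnionAtMost (Nat.floor (α r) * Nat.floor (β r) + Nat.floor (α r) + Nat.floor (β r))
          s W₁ :=
  fun _ _ hr hrs => apdPair_prod_general hX.finiteScaleDim hY.finiteScaleDim
    (hX.apdAt hr) (hY.apdAt hr) hr hrs
end

section
/- Let G be a countable group equipped with a left-invariant metric d (d(g·x, g·y) = d(x,y) for all g, x, y ∈ G) that is proper (every ball of finite radius contains only finitely many elements). If (α_0,…,α_k) is an APD profile of every finitely generated subgroup of G (with the metric induced from G), then (α_0,…,α_k) is an APD profile of G. -/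
open Set
open scoped ENNReal

/-- `(α 0, …, α k)` is an APD profile of `X`: each `α i` is a non-decreasing
nonnegative function of positive reals, `α 0` is constant, and for every non-decreasing array
`(r 0, …, r k)` of positive reals there is a decomposition `X = F 0 ∪ … ∪ F k` where each
`F i` is the union of at most `⌊α i (r (i-1))⌋` subsets of scale-`r i`-dimension `0`
(`α 0` being applied to its constant value for `i = 0`). -/
def IsAPDProfile (X : Type*) [PseudoEMetricSpace X] (k : ℕ) (α : ℕ → ℝ → ℝ) : Prop :=
  (∀ x y : ℝ, α 0 x = α 0 y) ∧
  (∀ i ≤ k, MonotoneOn (α i) (Set.Ioi (0 : ℝ))) ∧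
  (∀ i ≤ k, ∀ x : ℝ, 0 < x → 0 ≤ α i x) ∧
  (∀ r : ℕ → ℝ, (∀ i ≤ k, 0 < r i) → (∀ i < k, r i ≤ r (i + 1)) →
    ∃ F : ℕ → Set X, (⋃ i ∈ Finset.range (k + 1), F i) = univ ∧
      ∀ i ≤ k, UnionAtMost (Nat.floor (α i (if i = 0 then 0 else r (i - 1)))) (r i) (F i))

/-!
If `H` contains the ball of radius `R` about `1`, distinct left cosets of `H` are at distance at
least `R`, so up to scale `R` no chain leaves a coset, and by left invariance each coset is an
isometric copy of `H`. Hence the translates of a decomposition of `H` to all cosets decompose `G`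
with the same bounds. Properness makes the subgroup generated by a ball finitely generated.
-/

section Scale

variable {X Y Q : Type*} [PseudoEMetricSpace X] [PseudoEMetricSpace Y] {r : ℝ}

theorem ScaleChain.map_s19 {f : X → Y} {A : Set X} {B : Set Y} {x y : X}
    (h : ScaleChain r A x y) (hAB : MapsTo f A B)
    (hf : ∀ a b, edist a b < ENNReal.ofReal r → edist (f a) (f b) < ENNReal.ofReal r) :
    ScaleChain r B (f x) (f y) := by
  obtain ⟨n, c, hc, rfl, rfl, hstep⟩ := h
  refine ⟨n, f ∘ c, fun i hi => hAB (hc i hi), rfl, rfl, fun i hi => ?_⟩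
  obtain ⟨z, hz, hz'⟩ := hstep i hi
  exact ⟨f z, hf _ _ hz, hf _ _ hz'⟩

theorem ScaleChain.apply_eq {p : X → Q} {A : Set X} {x y : X} (h : ScaleChain r A x y)
    (hp : ∀ a b, edist a b < ENNReal.ofReal r → p a = p b) : p x = p y := by
  obtain ⟨n, c, -, rfl, rfl, hstep⟩ := h
  have hp_step : ∀ i < n, p (c i) = p (c (i + 1)) := fun i hi => by
    obtain ⟨z, hz, hz'⟩ := hstep i hi
    exact (hp z _ hz).symm.trans (hp z _ hz')
  have hp_zero : ∀ i ≤ n, p (c 0) = p (c i) := fun i hi => by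
    induction i with
    | zero => rfl
    | succ i ih => exact (ih (Nat.le_of_succ_le hi)).trans (hp_step i hi)
  exact hp_zero n le_rfl

theorem ScaleDimZero.preimage_of_isometric_on_fibers {f : X → Y} {p : X → Q} {A : Set Y}
    (hA : ScaleDimZero r A) (hp : ∀ x y, edist x y < ENNReal.ofReal r → p x = p y)
    (hf : ∀ x y, p x = p y → edist (f x) (f y) = edist x y) :
    ScaleDimZero r (f ⁻¹' A) := by
  obtain ⟨M, hM, hdiam⟩ := hA
  have hchain {x y : X} (h : ScaleChain r (f ⁻¹' A) x y) : ScaleChain r A (f x) (f y) :=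
    h.map_s19 (mapsTo_preimage f A) fun a b hab => (hf a b (hp a b hab)).trans_lt hab
  refine ⟨M, hM, fun x hx => Metric.ediam_le fun y hy z hz => ?_⟩
  calc
    edist y z = edist (f y) (f z) := (hf y z ((hy.apply_eq hp).symm.trans (hz.apply_eq hp))).symm
    _ ≤ Metric.ediam (ScaleComponent r A (f x)) :=
      Metric.edist_le_ediam_of_mem (hchain hy) (hchain hz)
    _ ≤ M := hdiam (f x) hx

theorem UnionAtMost.preimage_s19 {f : X → Y} {n : ℕ} {A : Set Y} (hA : UnionAtMost n r A)
    (hf : ∀ B, ScaleDimZero r B → ScaleDimZero r (f ⁻¹' B)) : UnionAtMost n r (f ⁻¹' A) := by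
  obtain ⟨B, rfl, hB⟩ := hA
  exact ⟨fun j => f ⁻¹' B j, preimage_iUnion, fun j => hf _ (hB j)⟩

end Scale

section LeftInvariant

variable {G : Type*} [Group G] [PseudoEMetricSpace G] [IsIsometricSMul G G] {H : Subgroup G}

theorem quotientGroup_mk_eq_of_edist_lt {ε : ℝ≥0∞} (hH : Metric.eball (1 : G) ε ⊆ H) {x y : G}
    (hxy : edist x y < ε) : (x : G ⧸ H) = y := by
  refine QuotientGroup.eq.2 (hH ?_)
  rwa [Metric.mem_eball, edist_comm, ← edist_mul_left x, mul_one, mul_inv_cancel_left]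

variable (H) in
theorem exists_map_subgroup_isometric_on_leftCosets :
    ∃ f : G → H, ∀ x y : G, (x : G ⧸ H) = y → edist (f x) (f y) = edist x y := by
  refine ⟨fun x => ⟨(x : G ⧸ H).out⁻¹ * x, QuotientGroup.eq.1 (QuotientGroup.out_eq' _)⟩,
    fun x y hxy => ?_⟩
  simp only [Subtype.edist_eq, hxy, edist_mul_left]

theorem apdProfile_of_fg_subgroups_general {k : ℕ} {α : ℕ → ℝ → ℝ}
    (h : ∀ R : ℝ, ∃ H : Subgroup G,
      Metric.eball (1 : G) (ENNReal.ofReal R) ⊆ H ∧ IsAPDProfile H k α) :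
    IsAPDProfile G k α := by
  obtain ⟨-, -, hconst, hmono, hnonneg, -⟩ := h 0
  refine ⟨hconst, hmono, hnonneg, fun r hpos hle => ?_⟩
  obtain ⟨H, hball, -, -, -, hdecomp⟩ := h (r k)
  obtain ⟨F, hcover, hunion⟩ := hdecomp r hpos hle
  obtain ⟨f, hf⟩ := exists_map_subgroup_isometric_on_leftCosets H
  refine ⟨fun i => f ⁻¹' F i, by rw [← preimage_iUnion₂, hcover, preimage_univ], fun i hi => ?_⟩
  have hr : r i ≤ r k := Nat.decreasingInduction (motive := fun j _ => r j ≤ r k)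
    (fun j hj ih => (hle j hj).trans ih) le_rfl hi
  have hcoset (x y : G) (hxy : edist x y < ENNReal.ofReal (r i)) : (x : G ⧸ H) = y :=
    quotientGroup_mk_eq_of_edist_lt hball (hxy.trans_le (ENNReal.ofReal_le_ofReal hr))
  exact (hunion i hi).preimage_s19 fun A hA => hA.preimage_of_isometric_on_fibers hcoset hf

end LeftInvariant

/-- Let `G` be a countable group equipped with a left-invariant metric (`dist (g*x) (g*y) =
dist x y`) that is proper (every ball of finite radius is a finite set). If `(α 0, …, α k)`
is an APD profile of every finitely generated subgroup of `G` (with the metric induced from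
`G`), then `(α 0, …, α k)` is an APD profile of `G`. -/
theorem apdProfile_of_fg_subgroups {G : Type*} [Group G] [Countable G] [MetricSpace G]
    (hinv : ∀ g x y : G, dist (g * x) (g * y) = dist x y)
    (hproper : ∀ x : G, ∀ R : ℝ, (Metric.ball x R).Finite)
    (k : ℕ) (α : ℕ → ℝ → ℝ)
    (hfg : ∀ H : Subgroup G, H.FG → IsAPDProfile H k α) :
    IsAPDProfile G k α := by
  have : IsIsometricSMul G G := ⟨fun g => Isometry.of_dist_eq (hinv g)⟩
  exact apdProfile_of_fg_subgroups_general fun R => ⟨Subgroup.closure (Metric.ball 1 R),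
    Metric.eball_ofReal.trans_subset Subgroup.subset_closure,
    hfg _ ((Subgroup.fg_iff _).2 ⟨_, rfl, hproper 1 R⟩)⟩
end
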